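/- Let n ≥ 2, let K ⊆ ℂⁿ be compact, and let x, y ∈ ℂⁿ be two points lying outside the holomorphically convex hull Ĥ(K). Let x₁, …, x_m ∈ K and let ε > 0. Then there exists a holomorphic automorphism Ψ of ℂⁿ such that Ψ(x_i) = x_i for every i = 1, …, m, ‖Ψ(z) − z‖ < ε for all z ∈ K, and Ψ(y) = x. (This is Proposition 2.5 of the paper specialized to X = ℂⁿ, which has the density property.) -/

import Mathlib

/-- The holomorphically convex hull of a set `K ⊆ ℂⁿ`: the set of points `z`
with `‖f z‖ ≤ sup_{w ∈ K} ‖f w‖` for every entire function `f : ℂⁿ → ℂ`. -/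
def holomorphicHull {n : ℕ} (K : Set (EuclideanSpace ℂ (Fin n))) :
    Set (EuclideanSpace ℂ (Fin n)) :=
  {z | ∀ f : EuclideanSpace ℂ (Fin n) → ℂ, Differentiable ℂ f →
    ‖f z‖ ≤ sSup ((fun w => ‖f w‖) '' K)}

/-- A holomorphic automorphism of `ℂⁿ`: a bijective entire map whose inverse is
also entire. -/
def IsHolomorphicAutomorphism {n : ℕ} (g : EuclideanSpace ℂ (Fin n) → EuclideanSpace ℂ (Fin n)) :
    Prop :=
  Differentiable ℂ g ∧
    ∃ ginv : EuclideanSpace ℂ (Fin n) → EuclideanSpace ℂ (Fin n),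
      Differentiable ℂ ginv ∧ Function.LeftInverse ginv g ∧ Function.RightInverse ginv g

/-!
For a linear functional `l` and vectors `u`, `v`, the flow of `exp (l z) • (l u • v - l v • u)`
consists of shears, because this field takes values in `ker l` and depends only on `l z`. By the
Cauchy integral formula in a closed subalgebra of `C(L, ℂ)`, the exponentials `exp ∘ l` span a dense
subspace of the entire functions on every compact `L`. Hence `dG(u) v - dG(v) u` is, for every
entire `G`, a limit of sums of such fields, and composing many short shears gives automorphisms
approximating its flow.

Let `p` lie outside the hull of `K`. Some entire function is `1` at `p` and small on `K`; iterating
`w ↦ 3 w² - 2 w³` turns it into a cutoff which is nearly `1` near `p` and nearly `0` near `K`.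
Taking for `G` the cutoff times a linear functional `m` with `m v = 0` and `m u = 1` gives a field
which is nearly `v` near `p` and nearly `0` near `K`. So automorphisms close to the identity on `K`
move points locally, and also globally since the complement of the hull is connected by the maximum
principle. The remaining small errors at finitely many points are removed by two shears that
interpolate the required displacements.
-/

open Bornology Filter Function Metric Module Set Topology

section ClosedSubalgebra

theorem mem_of_forall_exp_smul_mem {A : Type*} [NormedRing A] [NormedAlgebra ℂ A] [CompleteSpace A]
    {S : Subalgebra ℂ A} (hS : IsClosed (S : Set A)) {a : A}
    (ha : ∀ t : ℂ, NormedSpace.exp (t • a) ∈ S) : a ∈ S := by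
  have hderiv : deriv (fun t : ℂ => NormedSpace.exp (t • a)) 0 = a := by
    simpa using (hasDerivAt_exp_smul_const (𝕂 := ℂ) a 0).deriv
  have hspan : Submodule.span ℂ ((fun t : ℂ => NormedSpace.exp (t • a)) '' univ) ≤
      Subalgebra.toSubmodule S :=
    Submodule.span_le.2 (by rintro _ ⟨t, -, rfl⟩; exact ha t)
  have hmem := range_deriv_subset_closure_span_image (fun t : ℂ => NormedSpace.exp (t • a))
    dense_univ (mem_range_self 0)
  rw [hderiv] at hmem
  exact closure_minimal hspan hS hmem

theorem circleIntegral_clm_comp_comm {F G : Type*} [NormedAddCommGroup F]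
    [NormedSpace ℂ F] [CompleteSpace F] [NormedAddCommGroup G] [NormedSpace ℂ G] [CompleteSpace G]
    (L : F →L[ℂ] G) {f : ℂ → F} {c : ℂ} {r : ℝ} (hf : CircleIntegrable f c r) :
    ∮ w in C(c, r), L (f w) = L (∮ w in C(c, r), f w) := by
  simpa [circleIntegral] using L.intervalIntegral_comp_comm hf.out

variable {X : Type*} [TopologicalSpace X] [CompactSpace X] {S : Subalgebra ℂ C(X, ℂ)}

/- The Cauchy integral `(2πi)⁻¹ ∮ (w - a)⁻¹ F(w, ·) dw` takes place in the Banach algebra `S`,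
and its value at `x` is `F (a x, x)` by the Cauchy formula. -/
theorem holomorphic_comp_mem (hS : IsClosed (S : Set C(X, ℂ))) {a : C(X, ℂ)} (ha : a ∈ S)
    {F : C(ℂ × X, ℂ)} (hF : ∀ x, Differentiable ℂ fun w => F (w, x))
    (hFS : ∀ w, F.curry w ∈ S) :
    F.comp (a.prodMk (ContinuousMap.id X)) ∈ S := by
  have : CompleteSpace S := hS.completeSpace_coe
  set r : ℝ := ‖a‖ * ‖(1 : S)‖ + ‖a‖ + 1
  have hr : 0 < r := by positivity
  set b : S := ⟨a, ha⟩
  have hb : ∀ w ∈ sphere (0 : ℂ) r, w ∈ resolventSet ℂ b := fun w hw =>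
    spectrum.mem_resolventSet_of_norm_lt_mul (by
      rw [mem_sphere_zero_iff_norm.1 hw]
      exact lt_of_le_of_lt (le_add_of_nonneg_right (norm_nonneg a)) (lt_add_one _))
  set g : ℂ → S := fun w => resolvent b w * ⟨F.curry w, hFS w⟩
  have hg : CircleIntegrable g 0 r := by
    refine ContinuousOn.circleIntegrable hr.le (ContinuousOn.mul (fun w hw => ?_) ?_)
    · exact (spectrum.hasDerivAt_resolvent_const_left (hb w hw)).continuousAt.continuousWithinAt
    · exact (F.curry.continuous.subtype_mk hFS).continuousOn
  suffices F.comp (a.prodMk (ContinuousMap.id X)) =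
      ((2 * Real.pi * Complex.I : ℂ)⁻¹ • ∮ w in C(0, r), g w : S) from this ▸ Subtype.prop _
  ext x
  set ev : S →L[ℂ] ℂ := (ContinuousMap.evalCLM ℂ x).comp (Subalgebra.toSubmodule S).subtypeL
  have hax : a x ∈ ball (0 : ℂ) r := by
    rw [mem_ball_zero_iff]
    have : 0 ≤ ‖a‖ * ‖(1 : S)‖ := by positivity
    linarith [a.norm_coe_le_norm x]
  have hgx : ∀ w ∈ sphere (0 : ℂ) r, ev (g w) = (w - a x)⁻¹ • F (w, x) := by
    intro w hw
    have hinv : ev ((algebraMap ℂ S w - b) * resolvent b w) = 1 :=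
      congrArg ev (Ring.mul_inverse_cancel _ (hb w hw))
    change (w - a x) * ev (resolvent b w) = 1 at hinv
    exact congrArg (· * F (w, x)) (eq_inv_of_mul_eq_one_right hinv)
  have hcauchy := (hF x).diffContOnCl.two_pi_i_inv_smul_circleIntegral_sub_inv_smul hax
  rw [← circleIntegral.integral_congr hr.le hgx, circleIntegral_clm_comp_comm ev hg] at hcauchy
  exact hcauchy.symm

theorem entire_comp_sum_smul_mem (hS : IsClosed (S : Set C(X, ℂ))) {F : Type*}
    [NormedAddCommGroup F] [NormedSpace ℂ F] {ι : Type*} (s : Finset ι) {a : ι → C(X, ℂ)}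
    (ha : ∀ i, a i ∈ S) (e : ι → F) {f : F → ℂ} (hf : Differentiable ℂ f) :
    (⟨fun x => f (∑ i ∈ s, a i x • e i), hf.continuous.comp (by fun_prop)⟩ : C(X, ℂ)) ∈ S := by
  classical
  induction s using Finset.induction_on generalizing f with
  | empty =>
    convert S.algebraMap_mem (f 0) using 1
    ext x
    simp
  | insert i s hi ih =>
    have hfc := hf.continuous
    let G : C(ℂ × X, ℂ) := ⟨fun p => f (∑ j ∈ s, a j p.2 • e j + p.1 • e i), by fun_prop⟩
    have hG : G.comp ((a i).prodMk (ContinuousMap.id X)) ∈ S :=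
      holomorphic_comp_mem hS (ha i) (fun x => by simp only [G, ContinuousMap.coe_mk]; fun_prop)
        fun w => ih (f := fun z => f (z + w • e i)) (by fun_prop)
    convert hG using 1
    ext x
    simp [G, Finset.sum_insert hi, add_comm]

end ClosedSubalgebra

section ExponentialSums

variable {E : Type*} [NormedAddCommGroup E] [NormedSpace ℂ E]

/-- The exponential sum `∑ₗ c l * exp (l z)` with finitely many frequencies `l`, which are
continuous linear functionals on `E`. -/
noncomputable def expSum (c : (E →L[ℂ] ℂ) →₀ ℂ) (z : E) : ℂ :=
  c.sum fun l a => a * Complex.exp (l z)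

theorem hasFDerivAt_expSum (c : (E →L[ℂ] ℂ) →₀ ℂ) (z : E) :
    HasFDerivAt (expSum c) (∑ l ∈ c.support, c l • Complex.exp (l z) • l) z :=
  HasFDerivAt.fun_sum fun l _ => l.hasFDerivAt.cexp.const_mul (c l)

theorem differentiable_expSum (c : (E →L[ℂ] ℂ) →₀ ℂ) : Differentiable ℂ (expSum c) :=
  fun z => (hasFDerivAt_expSum c z).differentiableAt

/-- The restrictions to `K` of the exponentials `exp ∘ l` of continuous linear functionals `l`, as
a monoid homomorphism into the continuous functions on `K`. -/
noncomputable def expOn (K : Set E) : Multiplicative (E →L[ℂ] ℂ) →* C(K, ℂ) where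
  toFun l := ⟨fun z => Complex.exp (l.toAdd z), by fun_prop⟩
  map_one' := by ext; simp
  map_mul' l m := by ext; simp [Complex.exp_add]

theorem exists_expSum_eq_of_mem_adjoin {K : Set E} {g : C(K, ℂ)}
    (hg : g ∈ Algebra.adjoin ℂ (MonoidHom.mrange (expOn K) : Set C(K, ℂ))) :
    ∃ c, ∀ z : K, g z = expSum c (z : E) := by
  rw [← Subalgebra.mem_toSubmodule, Algebra.adjoin_eq_span, Submonoid.closure_eq,
    MonoidHom.coe_mrange, Finsupp.mem_span_range_iff_exists_finsupp] at hg
  obtain ⟨c, rfl⟩ := hg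
  refine ⟨c, fun z => ?_⟩
  simp only [Finsupp.sum, expSum, ContinuousMap.sum_apply]
  rfl

variable {K : Set E}

theorem clm_restrict_mem_topologicalClosure_adjoin_expOn [CompactSpace K] (l : E →L[ℂ] ℂ) :
    (l : C(E, ℂ)).restrict K ∈
      (Algebra.adjoin ℂ (MonoidHom.mrange (expOn K) : Set C(K, ℂ))).topologicalClosure := by
  refine mem_of_forall_exp_smul_mem (Subalgebra.isClosed_topologicalClosure _) fun t => ?_
  have hexp : NormedSpace.exp (t • (l : C(E, ℂ)).restrict K) =
      expOn K (Multiplicative.ofAdd (t • l)) := by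
    ext z
    refine (NormedSpace.map_exp (ContinuousMap.evalAlgHom ℂ ℂ z) (continuous_eval_const z) _).trans
      ?_
    rw [← Complex.exp_eq_exp_ℂ]
    rfl
  rw [hexp]
  exact Subalgebra.le_topologicalClosure _ (Algebra.subset_adjoin ⟨_, rfl⟩)

theorem exists_norm_expSum_sub_lt [FiniteDimensional ℂ E] (hK : IsCompact K) {f : E → ℂ}
    (hf : Differentiable ℂ f) {ε : ℝ} (hε : 0 < ε) :
    ∃ c, ∀ z ∈ K, ‖expSum c z - f z‖ < ε := by
  have : CompactSpace K := isCompact_iff_compactSpace.1 hK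
  have hfK := entire_comp_sum_smul_mem (Subalgebra.isClosed_topologicalClosure _) Finset.univ
    (fun i => clm_restrict_mem_topologicalClosure_adjoin_expOn (K := K)
      ((finBasis ℂ E).coord i).toContinuousLinearMap) (finBasis ℂ E) hf
  obtain ⟨g, hg, hfg⟩ := Metric.mem_closure_iff.1 hfK ε hε
  obtain ⟨c, hc⟩ := exists_expSum_eq_of_mem_adjoin hg
  refine ⟨c, fun z hz => ?_⟩
  rw [← hc ⟨z, hz⟩, ← dist_eq_norm, dist_comm]
  refine lt_of_le_of_lt (le_of_eq ?_) ((ContinuousMap.dist_apply_le_dist ⟨z, hz⟩).trans_lt hfg)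
  congr 1
  exact congrArg f ((finBasis ℂ E).sum_repr z).symm

end ExponentialSums

section HolomorphicHull

theorem frontier_connectedComponentIn_subset_compl {X : Type*} [TopologicalSpace X]
    [LocallyConnectedSpace X] {U : Set X} (hU : IsOpen U) (p : X) :
    frontier (connectedComponentIn U p) ⊆ Uᶜ := by
  intro w hw hwU
  obtain ⟨q, hqw, hqp⟩ := mem_closure_iff.1 (frontier_subset_closure hw) _
    (hU.connectedComponentIn (x := w)) (mem_connectedComponentIn hwU)
  rw [hU.connectedComponentIn.frontier_eq, connectedComponentIn_eq hqp,
    ← connectedComponentIn_eq hqw] at hw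
  exact hw.2 (mem_connectedComponentIn hwU)

theorem isPreconnected_compl_of_forall_not_isBounded {F : Type*} [NormedAddCommGroup F]
    [NormedSpace ℝ F] (hF : 1 < Module.rank ℝ F) {S : Set F} (hS : IsBounded S)
    (h : ∀ p ∉ S, ¬ IsBounded (connectedComponentIn Sᶜ p)) : IsPreconnected Sᶜ := by
  obtain ⟨R, hR⟩ := hS.subset_ball 0
  have meets_sphere : ∀ p ∉ S, ∀ r, ‖p‖ ≤ r →
      ∃ q ∈ sphere (0 : F) r, q ∈ connectedComponentIn Sᶜ p := by
    intro p hp r hpr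
    obtain ⟨q, hq, hrq⟩ : ∃ q ∈ connectedComponentIn Sᶜ p, r ≤ ‖q‖ := by
      by_contra! hlt
      exact h p hp (isBounded_iff_forall_norm_le.2 ⟨r, fun q hq => (hlt q hq).le⟩)
    obtain ⟨w, hw, hwr⟩ := isPreconnected_connectedComponentIn.intermediate_value
      (mem_connectedComponentIn hp) hq continuous_norm.continuousOn ⟨hpr, hrq⟩
    exact ⟨w, mem_sphere_zero_iff_norm.2 hwr, hw⟩
  refine isPreconnected_of_forall_pair fun p hp q hq =>
    ⟨connectedComponentIn Sᶜ p, connectedComponentIn_subset _ _, mem_connectedComponentIn hp, ?_,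
      isPreconnected_connectedComponentIn⟩
  set r := max R (max ‖p‖ ‖q‖)
  obtain ⟨p', hp', hpp'⟩ := meets_sphere p hp r (le_max_of_le_right (le_max_left _ _))
  obtain ⟨q', hq', hqq'⟩ := meets_sphere q hq r (le_max_of_le_right (le_max_right _ _))
  have hsphere : sphere (0 : F) r ⊆ Sᶜ := fun w hw hwS =>
    (mem_ball_zero_iff.1 (hR hwS)).not_ge ((le_max_left _ _).trans
      (mem_sphere_zero_iff_norm.1 hw).ge)
  have hpq := (isPreconnected_sphere hF 0 r).subset_connectedComponentIn hp' hsphere hq'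
  rw [connectedComponentIn_eq hpp', connectedComponentIn_eq hpq, ← connectedComponentIn_eq hqq']
  exact mem_connectedComponentIn hq

variable {n : ℕ} {K : Set (EuclideanSpace ℂ (Fin n))}

theorem isClosed_holomorphicHull (K : Set (EuclideanSpace ℂ (Fin n))) :
    IsClosed (holomorphicHull K) := by
  simp only [holomorphicHull, ofPred_forall]
  exact isClosed_iInter fun f => isClosed_iInter fun hf =>
    isClosed_le hf.continuous.norm continuous_const

theorem subset_holomorphicHull (hK : IsCompact K) : K ⊆ holomorphicHull K :=
  fun _ hz _ hf => le_csSup (hK.image hf.continuous.norm).bddAbove (mem_image_of_mem _ hz)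

theorem isBounded_holomorphicHull (hK : IsBounded K) : IsBounded (holomorphicHull K) := by
  obtain ⟨R, hR, hKR⟩ := hK.exists_pos_norm_le
  refine isBounded_iff_forall_norm_le.2 ⟨R, fun z hz => ?_⟩
  have hzz : ‖z‖ * ‖z‖ ≤ ‖z‖ * R := calc
    ‖z‖ * ‖z‖ = ‖innerSL ℂ z z‖ := by simp [sq]
    _ ≤ sSup ((fun w => ‖innerSL ℂ z w‖) '' K) := hz _ (innerSL ℂ z).differentiable
    _ ≤ ‖z‖ * R := Real.sSup_le (forall_mem_image.2 fun w hw =>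
        (norm_inner_le_norm z w).trans (by gcongr; exact hKR w hw)) (by positivity)
  by_contra! hlt
  exact hlt.not_ge (le_of_mul_le_mul_left hzz (hR.trans hlt))

theorem not_isBounded_connectedComponentIn_compl_holomorphicHull [NeZero n]
    {p : EuclideanSpace ℂ (Fin n)} (hp : p ∉ holomorphicHull K) :
    ¬ IsBounded (connectedComponentIn (holomorphicHull K)ᶜ p) := fun hb =>
  hp fun f hf => Complex.norm_le_of_forall_mem_frontier_norm_le hb hf.diffContOnCl
    (fun _ hz => not_notMem.1 (frontier_connectedComponentIn_subset_compl
      (isClosed_holomorphicHull K).isOpen_compl p hz) f hf)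
    (subset_closure (mem_connectedComponentIn hp))

theorem isPreconnected_compl_holomorphicHull [NeZero n] (hK : IsBounded K) :
    IsPreconnected (holomorphicHull K)ᶜ := by
  have hrank : 1 < Module.rank ℝ (EuclideanSpace ℂ (Fin n)) := by
    rw [← finrank_eq_rank, finrank_real_of_complex, finrank_euclideanSpace_fin]
    have := NeZero.pos n
    exact_mod_cast (by lia : 1 < 2 * n)
  exact isPreconnected_compl_of_forall_not_isBounded hrank (isBounded_holomorphicHull hK)
    fun _ => not_isBounded_connectedComponentIn_compl_holomorphicHull

end HolomorphicHull

section Cutoff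

/-- The cubic `3 w² - 2 w³`, for which `0` and `1` are superattracting fixed points. Its iterates
turn a function that is roughly `0` or `1` into one that is nearly `0` or `1`. -/
def smoothstep (w : ℂ) : ℂ := 3 * w ^ 2 - 2 * w ^ 3

theorem differentiable_smoothstep : Differentiable ℂ smoothstep := by
  unfold smoothstep
  fun_prop

theorem norm_smoothstep_le {w : ℂ} (hw : ‖w‖ ≤ 1 / 10) : ‖smoothstep w‖ ≤ 1 / 2 * ‖w‖ := calc
  ‖smoothstep w‖ ≤ ‖3 * w ^ 2‖ + ‖2 * w ^ 3‖ := norm_sub_le _ _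
  _ = (3 * ‖w‖ + 2 * ‖w‖ ^ 2) * ‖w‖ := by simp only [norm_mul, norm_pow, Complex.norm_ofNat]; ring
  _ ≤ (3 * (1 / 10) + 2 * (1 / 10) ^ 2) * ‖w‖ := by gcongr
  _ ≤ 1 / 2 * ‖w‖ := by gcongr; norm_num

theorem norm_smoothstep_iterate_le {w : ℂ} (hw : ‖w‖ ≤ 1 / 10) (k : ℕ) :
    ‖smoothstep^[k] w‖ ≤ (1 / 2) ^ k * ‖w‖ := by
  induction k with
  | zero => simp
  | succ k ih =>
    have hk : (1 / 2 : ℝ) ^ k ≤ 1 := pow_le_one₀ (by norm_num) (by norm_num)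
    have hstep := norm_smoothstep_le
      (ih.trans ((mul_le_of_le_one_left (norm_nonneg w) hk).trans hw))
    rw [iterate_succ_apply', pow_succ', mul_assoc]
    exact hstep.trans (by gcongr)

theorem smoothstep_iterate_one_sub (w : ℂ) (k : ℕ) :
    smoothstep^[k] (1 - w) = 1 - smoothstep^[k] w := by
  have h : Semiconj (fun a : ℂ => 1 - a) smoothstep smoothstep := fun a => by
    simp only [smoothstep]
    ring
  exact ((h.iterate_right k) w).symm

theorem norm_smoothstep_iterate_sub_one_le {w : ℂ} (hw : ‖w - 1‖ ≤ 1 / 10) (k : ℕ) :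
    ‖smoothstep^[k] w - 1‖ ≤ (1 / 2) ^ k * ‖w - 1‖ := by
  have h := smoothstep_iterate_one_sub (1 - w) k
  rw [sub_sub_cancel] at h
  rw [h, sub_sub_cancel_left, norm_neg, norm_sub_rev w]
  exact norm_smoothstep_iterate_le (by rwa [norm_sub_rev]) k

variable {n : ℕ} {K : Set (EuclideanSpace ℂ (Fin n))} {p : EuclideanSpace ℂ (Fin n)}

theorem exists_eq_one_and_norm_lt_of_notMem_holomorphicHull (hK : IsCompact K)
    (hp : p ∉ holomorphicHull K) {δ : ℝ} (hδ : 0 < δ) :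
    ∃ f : EuclideanSpace ℂ (Fin n) → ℂ, Differentiable ℂ f ∧ f p = 1 ∧ ∀ w ∈ K, ‖f w‖ < δ := by
  simp only [holomorphicHull, mem_ofPred_eq, not_forall, not_le] at hp
  obtain ⟨f, hf, hfp⟩ := hp
  have hp0 : 0 < ‖f p‖ :=
    (Real.sSup_nonneg (forall_mem_image.2 fun w _ => norm_nonneg (f w))).trans_lt hfp
  obtain ⟨N, hN⟩ := exists_pow_lt_of_lt_one hδ ((div_lt_one hp0).2 hfp)
  refine ⟨fun z => (f z / f p) ^ N, by fun_prop, by simp [div_self (norm_pos_iff.1 hp0)],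
    fun w hw => lt_of_le_of_lt ?_ hN⟩
  rw [norm_pow, norm_div]
  gcongr
  exact le_csSup (hK.image hf.continuous.norm).bddAbove (mem_image_of_mem _ hw)

theorem exists_cutoff_of_notMem_holomorphicHull (hK : IsCompact K) (hp : p ∉ holomorphicHull K) :
    ∃ ρ > 0, ∀ ε > 0, ∃ χ : EuclideanSpace ℂ (Fin n) → ℂ, Differentiable ℂ χ ∧
      (∀ z ∈ closedBall p ρ, ‖χ z - 1‖ ≤ ε) ∧ ∀ z ∈ cthickening ρ K, ‖χ z‖ ≤ ε := by
  obtain ⟨f, hf, hfp, hfK⟩ :=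
    exists_eq_one_and_norm_lt_of_notMem_holomorphicHull hK hp (δ := 1 / 10) (by norm_num)
  obtain ⟨ρK, hρK, hK'⟩ := hK.exists_cthickening_subset_open
    (isOpen_lt hf.continuous.norm continuous_const) hfK
  obtain ⟨ρp, hρp, hp'⟩ := nhds_basis_closedBall.mem_iff.1
    ((isOpen_lt (hf.continuous.sub continuous_const).norm continuous_const).mem_nhds
      (show ‖f p - 1‖ < 1 / 10 by simp [hfp]))
  refine ⟨min ρK ρp, lt_min hρK hρp, fun ε hε => ?_⟩
  obtain ⟨k, hk⟩ := exists_pow_lt_of_lt_one hε (show (1 / 2 : ℝ) < 1 by norm_num)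
  have small : ∀ {a : ℂ}, ‖a‖ ≤ 1 / 10 → (1 / 2) ^ k * ‖a‖ ≤ ε := fun ha =>
    (mul_le_of_le_one_right (by positivity) (ha.trans (by norm_num))).trans hk.le
  refine ⟨smoothstep^[k] ∘ f, (differentiable_smoothstep.iterate k).comp hf,
    fun z hz => ?_, fun z hz => ?_⟩
  · have hz' : ‖f z - 1‖ ≤ 1 / 10 := (hp' (closedBall_subset_closedBall (min_le_right _ _) hz)).le
    exact (norm_smoothstep_iterate_sub_one_le hz' k).trans (small hz')
  · have hz' : ‖f z‖ ≤ 1 / 10 := (hK' (cthickening_mono (min_le_left _ _) K hz)).le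
    exact (norm_smoothstep_iterate_le hz' k).trans (small hz')

theorem exists_expSum_of_notMem_holomorphicHull (hK : IsCompact K) (hp : p ∉ holomorphicHull K) :
    ∃ ρ > 0, ∀ g : EuclideanSpace ℂ (Fin n) → ℂ, Differentiable ℂ g → ∀ ε > 0, ∃ c,
      (∀ z ∈ closedBall p ρ, ‖expSum c z - g z‖ ≤ ε) ∧
      ∀ z ∈ cthickening ρ K, ‖expSum c z‖ ≤ ε := by
  obtain ⟨ρ, hρ, hcut⟩ := exists_cutoff_of_notMem_holomorphicHull hK hp
  refine ⟨ρ, hρ, fun g hg ε hε => ?_⟩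
  have hL := (isCompact_closedBall p ρ).union (hK.cthickening (r := ρ))
  obtain ⟨C, hC⟩ := hL.exists_bound_of_continuousOn hg.continuous.continuousOn
  have hC0 : 0 ≤ C := (norm_nonneg _).trans (hC p (Or.inl (mem_closedBall_self hρ.le)))
  obtain ⟨χ, hχ, hχp, hχK⟩ := hcut (ε / (2 * (C + 1))) (by positivity)
  obtain ⟨c, hc⟩ := exists_norm_expSum_sub_lt hL (hχ.mul hg) (half_pos hε)
  have hmul : ∀ {a b : ℂ}, ‖a‖ ≤ ε / (2 * (C + 1)) → ‖b‖ ≤ C → ‖a * b‖ ≤ ε / 2 := by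
    intro a b ha hb
    calc ‖a * b‖ ≤ ε / (2 * (C + 1)) * (C + 1) := by
          rw [norm_mul]
          exact mul_le_mul ha (hb.trans (le_add_of_nonneg_right one_pos.le)) (norm_nonneg b)
            (by positivity)
      _ = ε / 2 := by field_simp
  refine ⟨c, fun z hz => ?_, fun z hz => ?_⟩
  · calc ‖expSum c z - g z‖ = ‖(expSum c z - χ z * g z) + (χ z - 1) * g z‖ := by congr 1; ring
      _ ≤ ε / 2 + ε / 2 := norm_add_le_of_le (hc z (Or.inl hz)).le
          (hmul (hχp z hz) (hC z (Or.inl hz)))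
      _ = ε := add_halves ε
  · calc ‖expSum c z‖ = ‖(expSum c z - χ z * g z) + χ z * g z‖ := by rw [sub_add_cancel]
      _ ≤ ε / 2 + ε / 2 := norm_add_le_of_le (hc z (Or.inr hz)).le
          (hmul (hχK z hz) (hC z (Or.inr hz)))
      _ = ε := add_halves ε

end Cutoff

section Automorphisms

theorem norm_iterate_sub_add_le {F : Type*} [NormedAddCommGroup F] [NormedSpace ℝ F] {Φ : F → F}
    {z v : F} {ε : ℝ} (hε : 0 ≤ ε) {M : ℕ} (hM : M ≠ 0)
    (hΦ : ∀ t ∈ Icc (0 : ℝ) 1, ∀ w ∈ closedBall (z + t • v) ε,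
      ‖Φ w - (w + (M : ℝ)⁻¹ • v)‖ ≤ (M : ℝ)⁻¹ * ε) :
    ‖Φ^[M] z - (z + v)‖ ≤ ε := by
  have hM' : (M : ℝ) ≠ 0 := Nat.cast_ne_zero.2 hM
  suffices h : ∀ j ≤ M, ‖Φ^[j] z - (z + (j * (M : ℝ)⁻¹) • v)‖ ≤ j * (M : ℝ)⁻¹ * ε by
    simpa [hM'] using h M le_rfl
  intro j hj
  induction j with
  | zero => simp
  | succ j ih =>
    have htube := ih (by lia)
    have hj1 : j * (M : ℝ)⁻¹ ≤ 1 := by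
      rw [← div_eq_mul_inv, div_le_one (by positivity)]
      exact_mod_cast (by lia : j ≤ M)
    have hstep := hΦ _ ⟨by positivity, hj1⟩ (Φ^[j] z)
      (mem_closedBall_iff_norm.2 (htube.trans (mul_le_of_le_one_left hε hj1)))
    rw [iterate_succ_apply']
    set w := Φ^[j] z
    calc ‖Φ w - (z + ((j + 1 : ℕ) * (M : ℝ)⁻¹) • v)‖
        = ‖(Φ w - (w + (M : ℝ)⁻¹ • v)) + (w - (z + (j * (M : ℝ)⁻¹) • v))‖ := by
          congr 1
          push_cast
          module
      _ ≤ (M : ℝ)⁻¹ * ε + j * (M : ℝ)⁻¹ * ε := norm_add_le_of_le hstep htube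
      _ = (j + 1 : ℕ) * (M : ℝ)⁻¹ * ε := by push_cast; ring

variable {n : ℕ}

theorem IsHolomorphicAutomorphism.id :
    IsHolomorphicAutomorphism (id : EuclideanSpace ℂ (Fin n) → EuclideanSpace ℂ (Fin n)) :=
  ⟨differentiable_id, _root_.id, differentiable_id, fun _ => rfl, fun _ => rfl⟩

theorem IsHolomorphicAutomorphism.comp
    {g h : EuclideanSpace ℂ (Fin n) → EuclideanSpace ℂ (Fin n)}
    (hg : IsHolomorphicAutomorphism g) (hh : IsHolomorphicAutomorphism h) :
    IsHolomorphicAutomorphism (g ∘ h) := by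
  obtain ⟨dg, gi, dgi, lg, rg⟩ := hg
  obtain ⟨dh, hi, dhi, lh, rh⟩ := hh
  exact ⟨dg.comp dh, hi ∘ gi, dhi.comp dgi, lg.comp lh, rg.comp rh⟩

theorem IsHolomorphicAutomorphism.iterate
    {g : EuclideanSpace ℂ (Fin n) → EuclideanSpace ℂ (Fin n)}
    (hg : IsHolomorphicAutomorphism g) (k : ℕ) : IsHolomorphicAutomorphism g^[k] := by
  induction k with
  | zero => exact .id
  | succ k ih => exact ih.comp hg

theorem isHolomorphicAutomorphism_shear {l : EuclideanSpace ℂ (Fin n) →L[ℂ] ℂ}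
    {h : ℂ → EuclideanSpace ℂ (Fin n)} (hh : Differentiable ℂ h) (hl : ∀ w, l (h w) = 0) :
    IsHolomorphicAutomorphism fun z => z + h (l z) :=
  ⟨by fun_prop, fun z => z - h (l z), by fun_prop, fun z => by simp [hl], fun z => by simp [hl]⟩

/-- A vector field `V` on `ℂⁿ` is *approximately integrable* if, uniformly on balls, its Euler
steps `z ↦ z + t • V z` agree with automorphisms up to `o(t)` as `t → 0⁺`. -/
def ApproximatelyIntegrable (V : EuclideanSpace ℂ (Fin n) → EuclideanSpace ℂ (Fin n)) : Prop :=
  ∀ R, ∀ ε > 0, ∀ᶠ t in 𝓝[>] (0 : ℝ), ∃ Φ, IsHolomorphicAutomorphism Φ ∧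
    ∀ z ∈ closedBall 0 R, ‖Φ z - (z + t • V z)‖ ≤ t * ε

namespace ApproximatelyIntegrable

variable {V W : EuclideanSpace ℂ (Fin n) → EuclideanSpace ℂ (Fin n)}

theorem shear {l : EuclideanSpace ℂ (Fin n) →L[ℂ] ℂ} {h : ℂ → EuclideanSpace ℂ (Fin n)}
    (hh : Differentiable ℂ h) (hl : ∀ w, l (h w) = 0) :
    ApproximatelyIntegrable fun z => h (l z) := by
  intro R ε hε
  filter_upwards [self_mem_nhdsWithin] with t ht
  refine ⟨fun z => z + (t : ℂ) • h (l z),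
    isHolomorphicAutomorphism_shear (h := fun w => (t : ℂ) • h w) (by fun_prop) (by simp [hl]),
    fun z _ => ?_⟩
  simp only [Complex.coe_smul, sub_self, norm_zero]
  exact mul_nonneg (mem_Ioi.1 ht).le hε.le

theorem zero : ApproximatelyIntegrable fun _ : EuclideanSpace ℂ (Fin n) => 0 :=
  shear (l := 0) (h := fun _ => 0) (by fun_prop) fun _ => rfl

theorem eventually_exists_near_id (hV : ApproximatelyIntegrable V) (hVc : Continuous V) (R : ℝ)
    {ε δ : ℝ} (hε : 0 < ε) (hδ : 0 < δ) :
    ∀ᶠ t in 𝓝[>] (0 : ℝ), ∃ Φ, IsHolomorphicAutomorphism Φ ∧ ∀ z ∈ closedBall 0 R,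
      ‖Φ z - (z + t • V z)‖ ≤ t * ε ∧ ‖Φ z - z‖ < δ := by
  obtain ⟨B, hB⟩ := (isCompact_closedBall (0 : EuclideanSpace ℂ (Fin n)) R)
    |>.exists_bound_of_continuousOn hVc.continuousOn
  have hsmall : ∀ᶠ t in 𝓝[>] (0 : ℝ), t * (ε + B) < δ :=
    (((continuous_mul_const (ε + B)).tendsto' 0 0 (zero_mul _)).mono_left
      nhdsWithin_le_nhds).eventually_lt_const hδ
  filter_upwards [hV R ε hε, hsmall, self_mem_nhdsWithin] with t ⟨Φ, hΦ, hΦV⟩ htδ ht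
  refine ⟨Φ, hΦ, fun z hz => ⟨hΦV z hz, lt_of_le_of_lt ?_ htδ⟩⟩
  calc ‖Φ z - z‖ = ‖(Φ z - (z + t • V z)) + t • V z‖ := by congr 1; abel
    _ ≤ t * ε + t * B := norm_add_le_of_le (hΦV z hz) (by
        rw [norm_smul, Real.norm_of_nonneg (mem_Ioi.1 ht).le]
        exact mul_le_mul_of_nonneg_left (hB z hz) (mem_Ioi.1 ht).le)
    _ = t * (ε + B) := by ring

theorem add (hV : ApproximatelyIntegrable V) (hVc : Continuous V)
    (hW : ApproximatelyIntegrable W) (hWc : Continuous W) :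
    ApproximatelyIntegrable fun z => V z + W z := by
  intro R ε hε
  have hε3 : 0 < ε / 3 := by positivity
  obtain ⟨δ, hδ, hWδ⟩ := Metric.uniformContinuousOn_iff.1
    ((isCompact_closedBall (0 : EuclideanSpace ℂ (Fin n)) (R + 1))
      |>.uniformContinuousOn_of_continuous hWc.continuousOn) (ε / 3) hε3
  filter_upwards [hV.eventually_exists_near_id hVc R hε3 (lt_min hδ one_pos),
    hW (R + 1) (ε / 3) hε3, self_mem_nhdsWithin] with t ⟨Φ, hΦ, hΦV⟩ ⟨Θ, hΘ, hΘW⟩ ht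
  refine ⟨Θ ∘ Φ, hΘ.comp hΦ, fun z hz => ?_⟩
  obtain ⟨hVz, hz_near⟩ := hΦV z hz
  have hΦz : Φ z ∈ closedBall 0 (R + 1) := by
    rw [mem_closedBall_zero_iff] at hz ⊢
    linarith [norm_le_norm_add_norm_sub' (Φ z) z, min_le_right δ 1]
  have hWz : ‖t • (W (Φ z) - W z)‖ ≤ t * (ε / 3) := by
    rw [norm_smul, Real.norm_of_nonneg (mem_Ioi.1 ht).le, ← dist_eq_norm]
    exact mul_le_mul_of_nonneg_left (hWδ _ hΦz _ (closedBall_subset_closedBall (by simp) hz)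
      ((dist_eq_norm (Φ z) z).trans_lt (hz_near.trans_le (min_le_left _ _)))).le (mem_Ioi.1 ht).le
  calc ‖Θ (Φ z) - (z + t • (V z + W z))‖
      = ‖(Θ (Φ z) - (Φ z + t • W (Φ z))) + (Φ z - (z + t • V z)) + t • (W (Φ z) - W z)‖ := by
        congr 1
        module
    _ ≤ t * (ε / 3) + t * (ε / 3) + t * (ε / 3) :=
        norm_add_le_of_le (norm_add_le_of_le (hΘW _ hΦz) hVz) hWz
    _ = t * ε := by ring

theorem sum {ι : Type*} (s : Finset ι)
    {V : ι → EuclideanSpace ℂ (Fin n) → EuclideanSpace ℂ (Fin n)}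
    (hV : ∀ i, ApproximatelyIntegrable (V i)) (hVc : ∀ i, Continuous (V i)) :
    ApproximatelyIntegrable fun z => ∑ i ∈ s, V i z := by
  classical
  induction s using Finset.induction_on with
  | empty => exact zero
  | insert i s hi ih =>
    simp only [Finset.sum_insert hi]
    exact (hV i).add (hVc i) ih (by fun_prop)

theorem exists_automorphism (hV : ApproximatelyIntegrable V)
    {T : Set (EuclideanSpace ℂ (Fin n) × EuclideanSpace ℂ (Fin n))} (hT : IsBounded T)
    {ε : ℝ} (hε : 0 < ε) (hVT : ∀ p ∈ T, ∀ t ∈ Icc (0 : ℝ) 1,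
      ∀ w ∈ closedBall (p.1 + t • p.2) ε, ‖V w - p.2‖ ≤ ε / 2) :
    ∃ Ψ, IsHolomorphicAutomorphism Ψ ∧ ∀ p ∈ T, ‖Ψ p.1 - (p.1 + p.2)‖ ≤ ε := by
  obtain ⟨R, hTR⟩ := isBounded_iff_forall_norm_le.1 hT
  obtain ⟨M, ⟨Φ, hΦ, hΦV⟩, hM⟩ := ((tendsto_inv_atTop_nhdsGT_zero.comp
    tendsto_natCast_atTop_atTop).eventually (hV (R + R + ε) (ε / 2) (half_pos hε))).and
    (eventually_ne_atTop 0) |>.exists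
  refine ⟨Φ^[M], hΦ.iterate M, fun p hp => norm_iterate_sub_add_le hε.le hM fun t ht w hw => ?_⟩
  have hw0 : w ∈ closedBall 0 (R + R + ε) := by
    have hp1 : ‖p.1‖ ≤ R := (norm_fst_le p).trans (hTR p hp)
    have hp2 : ‖t • p.2‖ ≤ R := by
      rw [norm_smul, Real.norm_of_nonneg ht.1]
      exact (mul_le_of_le_one_left (norm_nonneg _) ht.2).trans ((norm_snd_le p).trans (hTR p hp))
    exact mem_closedBall_zero_iff.2
      ((norm_le_of_mem_closedBall hw).trans (by gcongr; exact norm_add_le_of_le hp1 hp2))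
  calc ‖Φ w - (w + (M : ℝ)⁻¹ • p.2)‖
      = ‖(Φ w - (w + (M : ℝ)⁻¹ • V w)) + (M : ℝ)⁻¹ • (V w - p.2)‖ := by
        congr 1
        module
    _ ≤ (M : ℝ)⁻¹ * (ε / 2) + (M : ℝ)⁻¹ * (ε / 2) := norm_add_le_of_le (hΦV w hw0) (by
        rw [norm_smul, norm_inv, Real.norm_natCast]
        gcongr
        exact hVT p hp t ht w hw)
    _ = (M : ℝ)⁻¹ * ε := by ring

end ApproximatelyIntegrable

end Automorphisms

section CrossField

variable {E : Type*} [NormedAddCommGroup E] [NormedSpace ℂ E]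

/-- The vector field `dG(u) v - dG(v) u`, which is tangent to the level sets of `G`. It is a sum of
shear fields when `G` is an exponential sum, and it is constantly `v` when `G` is a linear
functional with `G v = 0` and `G u = 1`. -/
noncomputable def crossField (u v : E) (G : E → ℂ) (z : E) : E :=
  fderiv ℂ G z u • v - fderiv ℂ G z v • u

theorem crossField_sub (u v : E) {G H : E → ℂ} (hG : Differentiable ℂ G) (hH : Differentiable ℂ H)
    (z : E) : crossField u v (G - H) z = crossField u v G z - crossField u v H z := by
  simp only [crossField, fderiv_sub (hG z) (hH z), sub_apply]
  module

theorem crossField_expSum (u v : E) (c : (E →L[ℂ] ℂ) →₀ ℂ) (z : E) :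
    crossField u v (expSum c) z =
      ∑ l ∈ c.support, Complex.exp (l z) • c l • (l u • v - l v • u) := by
  simp only [crossField, (hasFDerivAt_expSum c z).fderiv, sum_apply,
    smul_apply, Finset.sum_smul, ← Finset.sum_sub_distrib]
  exact Finset.sum_congr rfl fun l _ => by module

theorem approximatelyIntegrable_crossField_expSum {n : ℕ} (u v : EuclideanSpace ℂ (Fin n))
    (c : (EuclideanSpace ℂ (Fin n) →L[ℂ] ℂ) →₀ ℂ) :
    ApproximatelyIntegrable (crossField u v (expSum c)) := by
  simp only [funext (crossField_expSum u v c)]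
  exact .sum _ (fun l => .shear (h := fun a => Complex.exp a • c l • (l u • v - l v • u))
    (by fun_prop) fun a => by simp [mul_comm]) fun l => by fun_prop

theorem norm_fderiv_le_of_forall_mem_ball_norm_le {H : E → ℂ} {w : E} {r C : ℝ} (hr : 0 < r)
    (hH : DifferentiableOn ℂ H (ball w r)) (hC : ∀ z ∈ ball w r, ‖H z‖ ≤ C) :
    ‖fderiv ℂ H w‖ ≤ (C + C) / r :=
  Complex.norm_fderiv_le_div_of_mapsTo_ball hH (fun z hz => mem_closedBall_iff_norm.2
    (norm_sub_le_of_le (hC z hz) (hC w (mem_ball_self hr)))) hr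

theorem exists_pos_forall_norm_crossField_le (u v : E) {r ε : ℝ} (hr : 0 < r) (hε : 0 < ε) :
    ∃ δ > 0, ∀ (H : E → ℂ) (w : E), Differentiable ℂ H → (∀ z ∈ ball w r, ‖H z‖ ≤ δ) →
      ‖crossField u v H w‖ ≤ ε := by
  set δ := ε * r / (4 * (‖u‖ * ‖v‖ + 1)) with hδ
  refine ⟨δ, by positivity, fun H w hH hHδ => ?_⟩
  have hfd := norm_fderiv_le_of_forall_mem_ball_norm_le hr hH.differentiableOn hHδ
  calc ‖crossField u v H w‖ ≤ ‖fderiv ℂ H w u • v‖ + ‖fderiv ℂ H w v • u‖ := norm_sub_le _ _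
    _ ≤ (δ + δ) / r * ‖u‖ * ‖v‖ + (δ + δ) / r * ‖v‖ * ‖u‖ := by
      rw [norm_smul, norm_smul]
      gcongr
      · exact (fderiv ℂ H w).le_of_opNorm_le hfd u
      · exact (fderiv ℂ H w).le_of_opNorm_le hfd v
    _ = 4 * δ / r * (‖u‖ * ‖v‖) := by ring
    _ ≤ 4 * δ / r * (‖u‖ * ‖v‖ + 1) := by gcongr; simp
    _ = ε := by rw [hδ]; field_simp

theorem exists_clm_eq_zero_and_eq_one [FiniteDimensional ℂ E] (hE : 1 < finrank ℂ E) (v : E) :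
    ∃ (m : E →L[ℂ] ℂ) (u : E), m v = 0 ∧ m u = 1 := by
  have hv : Submodule.span ℂ {v} < ⊤ := lt_top_iff_ne_top.2 fun h => by
    have hcard := finrank_span_le_card (R := ℂ) {v}
    rw [h, finrank_top, toFinset_singleton, Finset.card_singleton] at hcard
    lia
  obtain ⟨m, hm, hvm⟩ := Submodule.exists_le_ker_of_lt_top _ hv
  obtain ⟨u, hu⟩ := LinearMap.surjective_of_ne_zero hm 1
  exact ⟨m.toContinuousLinearMap, u, hvm (Submodule.mem_span_singleton_self v), hu⟩

variable {n : ℕ} {K : Set (EuclideanSpace ℂ (Fin n))} {p : EuclideanSpace ℂ (Fin n)}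

theorem exists_approximatelyIntegrable_of_notMem_holomorphicHull (hn : 1 < n) (hK : IsCompact K)
    (hp : p ∉ holomorphicHull K) :
    ∃ ρ > 0, ∀ v, ∀ ε > 0, ∃ V, ApproximatelyIntegrable V ∧
      (∀ z ∈ closedBall p ρ, ‖V z - v‖ ≤ ε) ∧ ∀ z ∈ cthickening ρ K, ‖V z‖ ≤ ε := by
  obtain ⟨ρ, hρ, hexp⟩ := exists_expSum_of_notMem_holomorphicHull hK hp
  have hρ2 : 0 < ρ / 2 := half_pos hρ
  refine ⟨ρ / 2, hρ2, fun v ε hε => ?_⟩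
  obtain ⟨m, u, hmv, hmu⟩ := exists_clm_eq_zero_and_eq_one (by simpa using hn) v
  obtain ⟨δ, hδ, hcross⟩ := exists_pos_forall_norm_crossField_le u v hρ2 hε
  obtain ⟨c, hcp, hcK⟩ := hexp m m.differentiable δ hδ
  have hm : ∀ w, crossField u v m w = v := fun w => by
    simp [crossField, hmv, hmu]
  refine ⟨crossField u v (expSum c), approximatelyIntegrable_crossField_expSum u v c,
    fun w hw => ?_, fun w hw => hcross _ _ (differentiable_expSum c) fun z hz => hcK z ?_⟩
  · nth_rw 2 [← hm w]
    rw [← crossField_sub u v (differentiable_expSum c) m.differentiable]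
    refine hcross _ _ ((differentiable_expSum c).sub m.differentiable) fun z hz => hcp z ?_
    exact closedBall_subset_closedBall' (by linarith [mem_closedBall.1 hw])
      (ball_subset_closedBall hz)
  · rw [← add_halves ρ]
    exact cthickening_cthickening_subset hρ2.le hρ2.le K
      (mem_cthickening_of_dist_le z w _ _ hw (mem_ball.1 hz).le)

end CrossField

section ApproximateMotion

variable {n : ℕ} {K : Set (EuclideanSpace ℂ (Fin n))} {a b c p : EuclideanSpace ℂ (Fin n)}

/-- The point `b` is *approximately reachable* from `a` relative to `K` if automorphisms
arbitrarily close to the identity on `K` move `a` arbitrarily close to `b`. -/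
def ApproxReachable (K : Set (EuclideanSpace ℂ (Fin n))) (a b : EuclideanSpace ℂ (Fin n)) : Prop :=
  ∀ η > 0, ∃ Ψ, IsHolomorphicAutomorphism Ψ ∧ (∀ z ∈ K, ‖Ψ z - z‖ < η) ∧ ‖Ψ a - b‖ < η

theorem ApproxReachable.trans (hK : IsCompact K) (hab : ApproxReachable K a b)
    (hbc : ApproxReachable K b c) : ApproxReachable K a c := by
  intro η hη
  obtain ⟨Ψ, hΨ, hΨK, hΨb⟩ := hbc (η / 2) (half_pos hη)
  obtain ⟨δ, hδ, hΨδ⟩ := Metric.mem_uniformity_dist.1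
    ((hK.insert b).uniformContinuousAt_of_continuousAt Ψ (fun _ _ => hΨ.1.continuous.continuousAt)
      (dist_mem_uniformity (half_pos hη)))
  obtain ⟨Φ, hΦ, hΦK, hΦa⟩ := hab δ hδ
  have hcomp : ∀ {z w q}, w ∈ insert b K → ‖Φ z - w‖ < δ → ‖Ψ w - q‖ < η / 2 →
      ‖(Ψ ∘ Φ) z - q‖ < η := by
    intro z w q hw hzw hwq
    have hΨw : dist (Ψ w) (Ψ (Φ z)) < η / 2 :=
      hΨδ (by rwa [dist_comm, dist_eq_norm]) hw
    rw [dist_comm, dist_eq_norm] at hΨw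
    exact (norm_sub_le_norm_sub_add_norm_sub (Ψ (Φ z)) (Ψ w) q).trans_lt (by linarith)
  exact ⟨Ψ ∘ Φ, hΨ.comp hΦ,
    fun z hz => hcomp (mem_insert_of_mem b hz) (hΦK z hz) (hΨK z hz),
    hcomp (mem_insert b K) hΦa hΨb⟩

theorem exists_forall_mem_closedBall_approxReachable (hn : 1 < n) (hK : IsCompact K)
    (hp : p ∉ holomorphicHull K) :
    ∃ ρ > 0, ∀ a ∈ closedBall p ρ, ∀ b ∈ closedBall p ρ, ApproxReachable K a b := by
  obtain ⟨ρ, hρ, hfield⟩ := exists_approximatelyIntegrable_of_notMem_holomorphicHull hn hK hp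
  refine ⟨ρ / 2, half_pos hρ, fun a ha b hb η hη => ?_⟩
  set ε := min (ρ / 2) (η / 2)
  have hε : 0 < ε := by positivity
  have hερ : ε ≤ ρ / 2 := min_le_left _ _
  have hεη : ε < η := (min_le_right _ _).trans_lt (half_lt_self hη)
  obtain ⟨V, hV, hVp, hVK⟩ := hfield (b - a) (ε / 2) (half_pos hε)
  obtain ⟨Ψ, hΨ, hΨT⟩ := hV.exists_automorphism (T := insert (a, b - a) (K ×ˢ {0}))
    ((hK.prod isCompact_singleton).insert _).isBounded hε (by
      rintro q (rfl | ⟨hqK, hq0⟩) t ht w hw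
      · refine hVp w (closedBall_subset_closedBall' ?_ hw)
        have hseg := (convex_closedBall p (ρ / 2)).add_smul_sub_mem ha hb ht
        linarith [mem_closedBall.1 hseg]
      · rw [mem_singleton_iff.1 hq0, smul_zero, add_zero] at hw
        rw [mem_singleton_iff.1 hq0, sub_zero]
        exact hVK w (closedBall_subset_cthickening hqK ρ
          (closedBall_subset_closedBall (by linarith) hw)))
  refine ⟨Ψ, hΨ, fun z hz => ?_, ?_⟩
  · simpa using (hΨT (z, 0) (mem_insert_of_mem _ ⟨hz, rfl⟩)).trans_lt hεη
  · simpa using (hΨT (a, b - a) (mem_insert _ _)).trans_lt hεη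

theorem approxReachable_of_notMem_holomorphicHull (hn : 1 < n) (hK : IsCompact K)
    (ha : a ∉ holomorphicHull K) (hb : b ∉ holomorphicHull K) : ApproxReachable K a b := by
  have : NeZero n := ⟨by lia⟩
  refine (isPreconnected_compl_holomorphicHull hK.isBounded).induction₂' (ApproxReachable K)
    (fun p hp => ?_) (fun _ _ _ _ _ _ => .trans hK) ha hb
  obtain ⟨ρ, hρ, hreach⟩ := exists_forall_mem_closedBall_approxReachable hn hK hp
  have hpρ := mem_closedBall_self (x := p) hρ.le
  filter_upwards [mem_nhdsWithin_of_mem_nhds (closedBall_mem_nhds p hρ)] with q hq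
  exact ⟨hreach p hpρ q hq, hreach q hq p hpρ⟩

end ApproximateMotion

section Interpolation

theorem exists_clm_injOn_of_finite {E : Type*} [NormedAddCommGroup E] [NormedSpace ℂ E]
    [FiniteDimensional ℂ E] {P : Set E} (hP : P.Finite) : ∃ l : E →L[ℂ] ℂ, InjOn l P := by
  have := hP.offDiag.to_subtype
  obtain ⟨f, hf⟩ := Module.exists_dual_forall_apply_ne_zero (K := ℂ)
    (fun e : P.offDiag => e.1.1 - e.1.2) fun e => sub_ne_zero.2 e.2.2.2
  refine ⟨f.toContinuousLinearMap, fun p hp q hq hpq => ?_⟩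
  by_contra hne
  exact hf ⟨(p, q), hp, hq, hne⟩ (by simpa [sub_eq_zero] using hpq)

theorem eventually_nhds_injective {ι X : Type*} [Finite ι] [TopologicalSpace X] [T2Space X]
    {p : ι → X} (hp : Injective p) : ∀ᶠ q in 𝓝 p, Injective q := by
  simp only [injective_iff_pairwise_ne, Pairwise, eventually_all] at hp ⊢
  intro i j hij
  exact (isOpen_ne_fun (continuous_apply i) (continuous_apply j)).eventually_mem (hp hij)

section Lagrange

variable {ι E : Type*} [Fintype ι] [DecidableEq ι] [NormedAddCommGroup E] [NormedSpace ℂ E]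

/-- The Lagrange interpolation polynomial with nodes `ν i` and vector values `v i`. Mathlib's
`Lagrange.interpolate` is restricted to scalar values. -/
noncomputable def lagrangeInterpolant (ν : ι → ℂ) (v : ι → E) (w : ℂ) : E :=
  ∑ i, (Lagrange.basis Finset.univ ν i).eval w • v i

theorem lagrangeInterpolant_apply_node {ν : ι → ℂ} (hν : Injective ν) (v : ι → E) (i : ι) :
    lagrangeInterpolant ν v (ν i) = v i := by
  rw [lagrangeInterpolant, Finset.sum_eq_single_of_mem i (Finset.mem_univ i) fun j _ hji => by
    rw [Lagrange.eval_basis_of_ne hji (Finset.mem_univ i), zero_smul],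
    Lagrange.eval_basis_self hν.injOn (Finset.mem_univ i), one_smul]

theorem lagrangeInterpolant_zero (ν : ι → ℂ) (w : ℂ) :
    lagrangeInterpolant ν (0 : ι → E) w = 0 := by
  simp [lagrangeInterpolant]

theorem differentiable_lagrangeInterpolant (ν : ι → ℂ) (v : ι → E) :
    Differentiable ℂ (lagrangeInterpolant ν v) := by
  unfold lagrangeInterpolant
  fun_prop

theorem clm_lagrangeInterpolant_eq_zero {l : E →L[ℂ] ℂ} {v : ι → E} (hv : ∀ i, l (v i) = 0)
    (ν : ι → ℂ) (w : ℂ) : l (lagrangeInterpolant ν v w) = 0 := by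
  simp [lagrangeInterpolant, hv]

theorem continuousAt_lagrangeInterpolant {ν : ι → ℂ} (hν : Injective ν) (v : ι → E) (w : ℂ) :
    ContinuousAt (fun x : ((ι → ℂ) × (ι → E)) × ℂ => lagrangeInterpolant x.1.1 x.1.2 x.2)
      ((ν, v), w) := by
  simp only [lagrangeInterpolant, Lagrange.basis, Lagrange.basisDivisor, Polynomial.eval_prod,
    Polynomial.eval_mul, Polynomial.eval_C, Polynomial.eval_sub, Polynomial.eval_X]
  refine tendsto_finsetSum _ fun i _ => Tendsto.smul (tendsto_finsetProd _ fun j hj =>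
    Tendsto.mul (ContinuousAt.inv₀ (by fun_prop) ?_) ?_) ?_
  · exact sub_ne_zero.2 (hν.ne (Finset.ne_of_mem_erase hj).symm)
  · exact ContinuousAt.tendsto (x := ((ν, v), w)) (by fun_prop)
  · exact ContinuousAt.tendsto (x := ((ν, v), w)) (by fun_prop)

end Lagrange

theorem norm_comp_sub_lt {E : Type*} [SeminormedAddCommGroup E] {Φ Ψ : E → E} {K : Set E}
    {δ ε : ℝ} (hΦ : ∀ z ∈ K, ‖Φ z - z‖ < δ) (hΨ : ∀ z ∈ cthickening δ K, ‖Ψ z - z‖ < ε) :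
    ∀ z ∈ K, ‖(Ψ ∘ Φ) z - z‖ < ε + δ := by
  intro z hz
  have hΦz : Φ z ∈ cthickening δ K :=
    mem_cthickening_of_dist_le _ z _ _ hz (dist_eq_norm (Φ z) z ▸ (hΦ z hz).le)
  exact (norm_sub_le_norm_sub_add_norm_sub (Ψ (Φ z)) (Φ z) z).trans_lt
    (add_lt_add (hΨ _ hΦz) (hΦ z hz))

variable {n : ℕ} {ι : Type*} [Finite ι] {K : Set (EuclideanSpace ℂ (Fin n))}
  {p : ι → EuclideanSpace ℂ (Fin n)} {ε : ℝ}

theorem eventually_exists_shear_apply_eq_add {l : EuclideanSpace ℂ (Fin n) →L[ℂ] ℂ}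
    (hlp : Injective (l ∘ p)) (hK : IsCompact K) (hε : 0 < ε) :
    ∀ᶠ x in 𝓝 (p, (0 : ι → EuclideanSpace ℂ (Fin n))), (∀ i, l (x.2 i) = 0) →
      ∃ Θ, IsHolomorphicAutomorphism Θ ∧ (∀ i, Θ (x.1 i) = x.1 i + x.2 i) ∧
        ∀ z ∈ K, ‖Θ z - z‖ < ε := by
  classical
  have := Fintype.ofFinite ι
  have hnear : ∀ᶠ x in 𝓝 (p, (0 : ι → EuclideanSpace ℂ (Fin n))), ∀ z ∈ K,
      ‖lagrangeInterpolant (fun i => l (x.1 i)) x.2 (l z)‖ < ε := by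
    refine hK.eventually_forall_of_forall_eventually fun z _ => ?_
    exact ContinuousAt.tendsto (x := ((p, 0), z)) (ContinuousAt.norm
      (ContinuousAt.comp' (g := fun x => lagrangeInterpolant x.1.1 x.1.2 x.2)
      (f := fun y => ((fun i => l (y.1.1 i), y.1.2), l y.2))
      (continuousAt_lagrangeInterpolant hlp 0 (l z)) (by fun_prop)))
      |>.eventually_lt_const (by simpa [lagrangeInterpolant_zero] using hε)
  have hinj : ∀ᶠ x in 𝓝 (p, (0 : ι → EuclideanSpace ℂ (Fin n))),
      Injective fun i => l (x.1 i) :=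
    (Continuous.tendsto' (by fun_prop) _ _ rfl).eventually (eventually_nhds_injective hlp)
  filter_upwards [hnear, hinj] with x hxK hx hlx
  refine ⟨fun z => z + lagrangeInterpolant (fun i => l (x.1 i)) x.2 (l z),
    isHolomorphicAutomorphism_shear (differentiable_lagrangeInterpolant _ _)
      (clm_lagrangeInterpolant_eq_zero hlx _), fun i => ?_, fun z hz => ?_⟩
  · exact congrArg (x.1 i + ·) (lagrangeInterpolant_apply_node hx x.2 i)
  · simpa using hxK z hz

theorem eventually_exists_automorphism_apply_eq (hn : 1 < n) (hp : Injective p)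
    (hK : IsCompact K) (hε : 0 < ε) :
    ∀ᶠ q in 𝓝 p, ∃ Θ, IsHolomorphicAutomorphism Θ ∧ (∀ i, Θ (q i) = p i) ∧
      ∀ z ∈ K, ‖Θ z - z‖ < ε := by
  obtain ⟨l, hl⟩ := exists_clm_injOn_of_finite (finite_range p)
  obtain ⟨v, hlv, hv⟩ := (Submodule.ne_bot_iff _).1
    (LinearMap.ker_ne_bot_of_finrank_lt (f := l.toLinearMap) (by simpa using hn))
  obtain ⟨μ, hμ⟩ := exists_clm_injOn_of_finite (((finite_range p).insert v).insert 0)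
  have hμv : μ v ≠ 0 := fun h => hv (hμ (by simp) (by simp) (by simp [h]))
  have hlp : Injective (l ∘ p) := (hl.injective_iff _ subset_rfl).2 hp
  have hμp : Injective (μ ∘ p) := (hμ.injective_iff _ (by grind)).2 hp
  have hε2 := half_pos hε
  set a : (ι → EuclideanSpace ℂ (Fin n)) → ι → EuclideanSpace ℂ (Fin n) :=
    fun q i => (μ (p i - q i) / μ v) • v with ha
  have hap : a p = 0 := funext fun i => by simp [ha]
  have hq₁ : Tendsto (fun q => (q, a q)) (𝓝 p) (𝓝 (p, 0)) :=
    Continuous.tendsto' (by fun_prop) _ _ (by rw [hap])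
  have hq₂ : Tendsto (fun q => (q + a q, p - (q + a q))) (𝓝 p) (𝓝 (p, 0)) :=
    Continuous.tendsto' (by fun_prop) _ _ (by simp [hap])
  filter_upwards [hq₁.eventually (eventually_exists_shear_apply_eq_add hlp hK hε2),
    hq₂.eventually (eventually_exists_shear_apply_eq_add hμp (hK.cthickening (r := ε / 2)) hε2)]
    with q h₁ h₂
  obtain ⟨Θ₁, hΘ₁, hΘ₁q, hΘ₁K⟩ := h₁ fun i => by simpa [ha] using .inr hlv
  obtain ⟨Θ₂, hΘ₂, hΘ₂q, hΘ₂K⟩ := h₂ fun i => by simp [ha, hμv]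
  refine ⟨Θ₂ ∘ Θ₁, hΘ₂.comp hΘ₁, fun i => ?_, ?_⟩
  · simpa [hΘ₁q] using hΘ₂q i
  · simpa only [add_halves] using norm_comp_sub_lt hΘ₁K hΘ₂K

theorem ApproxReachable.exists_automorphism_apply_eq {a b : EuclideanSpace ℂ (Fin n)} (hn : 1 < n)
    (hK : IsCompact K) (hab : ApproxReachable K a b) (hb : b ∉ K)
    {P : Set (EuclideanSpace ℂ (Fin n))} (hP : P.Finite) (hPK : P ⊆ K) (hε : 0 < ε) :
    ∃ Ψ, IsHolomorphicAutomorphism Ψ ∧ (∀ z ∈ P, Ψ z = z) ∧ (∀ z ∈ K, ‖Ψ z - z‖ < ε) ∧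
      Ψ a = b := by
  classical
  have hε2 := half_pos hε
  have := (hP.insert b).fintype
  have hcorr := eventually_exists_automorphism_apply_eq (p := ((↑) : ↥(insert b P) → _)) hn
    Subtype.val_injective (hK.cthickening (r := ε / 2)) hε2
  obtain ⟨δ, hδ, hcorr⟩ := Metric.eventually_nhds_iff.1 hcorr
  obtain ⟨Φ, hΦ, hΦK, hΦa⟩ := hab (min δ (ε / 2)) (lt_min hδ hε2)
  have hPb : ∀ z ∈ P, z ≠ b := fun z hz => ne_of_mem_of_not_mem (hPK hz) hb
  obtain ⟨Θ, hΘ, hΘP, hΘK⟩ := hcorr (y := fun z => update Φ b (Φ a) z)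
    ((dist_pi_lt_iff hδ).2 fun ⟨z, hz⟩ => by
      rw [dist_eq_norm]
      rcases eq_or_mem_of_mem_insert hz with rfl | hzP
      · simpa using hΦa.trans_le (min_le_left _ _)
      · simpa [hPb z hzP] using (hΦK z (hPK hzP)).trans_le (min_le_left _ _))
  refine ⟨Θ ∘ Φ, hΘ.comp hΦ, fun z hz => ?_, ?_, ?_⟩
  · simpa [hPb z hz] using hΘP ⟨z, mem_insert_of_mem b hz⟩
  · simpa only [add_halves] using
      norm_comp_sub_lt (fun z hz => (hΦK z hz).trans_le (min_le_right _ _)) hΘK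
  · simpa using hΘP ⟨b, mem_insert b P⟩

end Interpolation

/-- **Moving a point while fixing finitely many points and almost fixing a
compact set.**  Let `n ≥ 2`, `K ⊆ ℂⁿ` compact, `x, y` outside the
holomorphically convex hull of `K`, and `a₁, …, a_m ∈ K`.  Then for every
`ε > 0` there is a holomorphic automorphism `Ψ` of `ℂⁿ` fixing each `aᵢ`,
moving no point of `K` more than `ε`, and sending `y` to `x`. -/
theorem exists_automorphism_moving_point
    (n : ℕ) (hn : 2 ≤ n)
    (K : Set (EuclideanSpace ℂ (Fin n))) (hK : IsCompact K)
    (x y : EuclideanSpace ℂ (Fin n))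
    (hx : x ∉ holomorphicHull K) (hy : y ∉ holomorphicHull K)
    (m : ℕ) (a : Fin m → EuclideanSpace ℂ (Fin n)) (ha : ∀ i, a i ∈ K)
    (ε : ℝ) (hε : 0 < ε) :
    ∃ Ψ : EuclideanSpace ℂ (Fin n) → EuclideanSpace ℂ (Fin n),
      IsHolomorphicAutomorphism Ψ ∧
      (∀ i, Ψ (a i) = a i) ∧
      (∀ z ∈ K, ‖Ψ z - z‖ < ε) ∧
      Ψ y = x := by
  obtain ⟨Ψ, hΨ, hΨa, hΨK, hΨy⟩ :=
    (approxReachable_of_notMem_holomorphicHull hn hK hy hx).exists_automorphism_apply_eq hn hK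
      (notMem_subset (subset_holomorphicHull hK) hx) (finite_range a) (range_subset_iff.2 ha) hε
  exact ⟨Ψ, hΨ, fun i => hΨa (a i) (mem_range_self i), hΨK, hΨy⟩
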